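/- Define g(x) = (1+x)log(1+x) - x·log x for x > 0. Fix 0 < τ < 1 and K ≥ 0, and set η(N) = τN + K, p(N) = sqrt((N + η + 1)² - 4τN(N+1)), ℓ(N) = (p - η + N - 1)/2. Then lim_{N→∞} [g(η(N)) - g(ℓ(N))] = log(τ/(1-τ)). -/

import Mathlib

/-!
Since `g x = log x + 1 + o(1)` as `x → ∞`, the difference `g u - g v` behaves like `log (u / v)`
whenever `u` and `v` are asymptotically proportional. If `η ~ τ N`, then `p / N` tends to
`√((1 + τ)² - 4 τ) = 1 - τ`, so `ℓ ~ (1 - τ) N` and `η / ℓ → τ / (1 - τ)`.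
-/

open Filter Topology

/-- The von Neumann entropy `g x` (in nats) of a thermal state of a bosonic mode with mean photon
number `x`. -/
noncomputable def bosonicEntropy (x : ℝ) : ℝ :=
  (1 + x) * Real.log (1 + x) - x * Real.log x

/-- The quantity `p(N)`, with the value of `η(N)` as the separate argument `η`: the square root of
the discriminant of the quadratic `x² + (η - N + 1) x + τ N (N + 1) - N (η + 1)`. -/
noncomputable def sqrtDiscr (τ η N : ℝ) : ℝ :=
  √((N + η + 1) ^ 2 - 4 * τ * N * (N + 1))

/-- The quantity `ℓ(N)`, with the value of `η(N)` as the separate argument `η`: the larger root of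
the quadratic whose discriminant defines `sqrtDiscr`, when this discriminant is nonnegative. -/
noncomputable def ell (τ η N : ℝ) : ℝ :=
  (sqrtDiscr τ η N - η + N - 1) / 2

theorem tendsto_bosonicEntropy_sub_log :
    Tendsto (fun x ↦ bosonicEntropy x - Real.log x) atTop (𝓝 1) := by
  have h_mul : Tendsto (fun x : ℝ ↦ x * Real.log (1 + 1 / x)) atTop (𝓝 1) :=
    Real.tendsto_mul_log_one_add_div_atTop 1
  have h_diff : Tendsto (fun x : ℝ ↦ Real.log (x + 1) - Real.log x) atTop (𝓝 0) :=
    Real.tendsto_log_comp_add_sub_log 1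
  rw [← add_zero (1 : ℝ)]
  refine (h_mul.add h_diff).congr' ?_
  filter_upwards [eventually_gt_atTop 0] with x hx
  have h_log : Real.log (1 + 1 / x) = Real.log (1 + x) - Real.log x := by
    rw [← Real.log_div (by positivity) hx.ne', add_div, div_self hx.ne', add_comm]
  rw [h_log, bosonicEntropy, add_comm x 1]
  ring

theorem tendsto_affine_div_atTop (a b : ℝ) :
    Tendsto (fun x ↦ (a * x + b) / x) atTop (𝓝 a) := by
  have h : Tendsto (fun x ↦ a + b / x) atTop (𝓝 (a + 0)) :=
    (tendsto_id.const_div_atTop b).const_add a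
  rw [add_zero] at h
  refine h.congr' ?_
  filter_upwards [eventually_ne_atTop 0] with x hx
  field_simp

theorem sqrtDiscr_div_self (τ η : ℝ) {N : ℝ} (hN : 0 < N) :
    sqrtDiscr τ η N / N = √((1 + η / N + 1 / N) ^ 2 - 4 * τ * (1 + 1 / N)) := by
  calc sqrtDiscr τ η N / N
      = √((N + η + 1) ^ 2 - 4 * τ * N * (N + 1)) / √(N ^ 2) := by
        rw [sqrtDiscr, Real.sqrt_sq hN.le]
    _ = √(((N + η + 1) ^ 2 - 4 * τ * N * (N + 1)) / N ^ 2) :=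
        (Real.sqrt_div' _ (sq_nonneg N)).symm
    _ = √((1 + η / N + 1 / N) ^ 2 - 4 * τ * (1 + 1 / N)) := by
        congr 1
        field_simp

section Asymptotics

variable {α : Type*} {l : Filter α}

theorem tendsto_bosonicEntropy_sub_of_tendsto_div {u v : α → ℝ} {c : ℝ} (hc : 0 < c)
    (hv : Tendsto v l atTop) (huv : Tendsto (fun a ↦ u a / v a) l (𝓝 c)) :
    Tendsto (fun a ↦ bosonicEntropy (u a) - bosonicEntropy (v a)) l (𝓝 (Real.log c)) := by
  have hu : Tendsto u l atTop := hv.num hc huv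
  have h := ((tendsto_bosonicEntropy_sub_log.comp hu).sub
    (tendsto_bosonicEntropy_sub_log.comp hv)).add (huv.log hc.ne')
  rw [sub_self, zero_add] at h
  refine h.congr' ?_
  filter_upwards [hu.eventually_ne_atTop 0, hv.eventually_ne_atTop 0] with a hua hva
  simp only [Function.comp_apply, Real.log_div hua hva]
  ring

variable {N η : α → ℝ} {c : ℝ}

theorem tendsto_sqrtDiscr_div (τ : ℝ) (hN : Tendsto N l atTop)
    (hη : Tendsto (fun a ↦ η a / N a) l (𝓝 c)) :
    Tendsto (fun a ↦ sqrtDiscr τ (η a) (N a) / N a) l (𝓝 √((1 + c) ^ 2 - 4 * τ)) := by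
  have h_inv : Tendsto (fun a ↦ 1 / N a) l (𝓝 0) := hN.const_div_atTop 1
  have h := ((((hη.const_add 1).add h_inv).pow 2).sub
    ((h_inv.const_add 1).const_mul (4 * τ))).sqrt
  rw [add_zero, add_zero, mul_one] at h
  refine h.congr' ?_
  filter_upwards [hN.eventually_gt_atTop 0] with a ha
  exact (sqrtDiscr_div_self τ (η a) ha).symm

theorem tendsto_ell_div (τ : ℝ) (hN : Tendsto N l atTop)
    (hη : Tendsto (fun a ↦ η a / N a) l (𝓝 c)) :
    Tendsto (fun a ↦ ell τ (η a) (N a) / N a) l (𝓝 ((√((1 + c) ^ 2 - 4 * τ) - c + 1) / 2)) := by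
  have h := ((((tendsto_sqrtDiscr_div τ hN hη).sub hη).add_const 1).sub
    (hN.const_div_atTop 1)).div_const 2
  rw [sub_zero] at h
  refine h.congr' ?_
  filter_upwards [hN.eventually_ne_atTop 0] with a ha
  rw [ell]
  field_simp

theorem limit_g_eta_minus_g_ell_general {τ : ℝ} (hτ_pos : 0 < τ) (hτ_lt : τ < 1)
    (hN : Tendsto N l atTop) (hη : Tendsto (fun a ↦ η a / N a) l (𝓝 τ)) :
    Tendsto (fun a ↦ bosonicEntropy (η a) - bosonicEntropy (ell τ (η a) (N a))) l
      (𝓝 (Real.log (τ / (1 - τ)))) := by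
  have h_one_sub : 0 < 1 - τ := sub_pos.2 hτ_lt
  have h_sqrt : √((1 + τ) ^ 2 - 4 * τ) = 1 - τ := by
    have h_sq : (1 + τ) ^ 2 - 4 * τ = (1 - τ) ^ 2 := by ring
    rw [h_sq, Real.sqrt_sq h_one_sub.le]
  have h_ell : Tendsto (fun a ↦ ell τ (η a) (N a) / N a) l (𝓝 (1 - τ)) := by
    convert tendsto_ell_div τ hN hη using 2
    rw [h_sqrt]
    ring
  have h_ratio : Tendsto (fun a ↦ η a / ell τ (η a) (N a)) l (𝓝 (τ / (1 - τ))) := by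
    refine (hη.div h_ell h_one_sub.ne').congr' ?_
    filter_upwards [hN.eventually_ne_atTop 0] with a ha
    exact div_div_div_cancel_right₀ ha _ _
  exact tendsto_bosonicEntropy_sub_of_tendsto_div (div_pos hτ_pos h_one_sub)
    (hN.num h_one_sub h_ell) h_ratio

end Asymptotics

theorem limit_g_eta_minus_g_ell (τ K : ℝ) (hτ1 : 0 < τ) (hτ2 : τ < 1) (hK : 0 ≤ K) :
    Filter.Tendsto
      (fun N : ℝ =>
        ((1 + (τ * N + K)) * Real.log (1 + (τ * N + K))
            - (τ * N + K) * Real.log (τ * N + K))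
          - ((1 + ((Real.sqrt ((N + (τ * N + K) + 1)^2 - 4 * τ * N * (N + 1))
                - (τ * N + K) + N - 1) / 2))
              * Real.log (1 + ((Real.sqrt ((N + (τ * N + K) + 1)^2
                  - 4 * τ * N * (N + 1)) - (τ * N + K) + N - 1) / 2))
            - ((Real.sqrt ((N + (τ * N + K) + 1)^2 - 4 * τ * N * (N + 1))
                - (τ * N + K) + N - 1) / 2)
              * Real.log ((Real.sqrt ((N + (τ * N + K) + 1)^2
                  - 4 * τ * N * (N + 1)) - (τ * N + K) + N - 1) / 2)))
      Filter.atTop (nhds (Real.log (τ / (1 - τ)))) :=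
  limit_g_eta_minus_g_ell_general hτ1 hτ2 tendsto_id (tendsto_affine_div_atTop τ K)
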